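/- Let n ≥ 1, N ≥ 2 be integers, let 1 < p ≤ 2 and α ∈ [0,1), let ε > 0, let w^1,…,w^N ∈ ℝ^n be vectors and H^1,…,H^N ∈ ℝ^{n×n} be symmetric matrices. Set s = ε + Σ_{β=1}^N |w^β|² and V = Σ_{β=1}^N H^β w^β. Then Σ_{β=1}^N |H^β|² + (p−2−α) |V|²/s − α(p−2) (Σ_{k=1}^N ⟨w^k, V⟩²)/s² ≥ K_N(p,α) · Σ_{β=1}^N |H^β|², where K_N(p,α) = 1 + (α(p−2)+p−2−α)²/(8α(p−2)) if p ∈ (1,3/2) and α ∈ ((p−2)/(3p−5), 1); K_N(p,α) = (p−1)(1−α) if p ∈ (1,3/2) and α ∈ [0, (p−2)/(3p−5)]; and K_N(p,α) = (p−1)(1−α) if p ∈ [3/2, 2]. -/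

import Mathlib

open Finset

/-!
Write `V = ∑ H^β w^β` and let `S^β = V ⊗ w^β + w^β ⊗ V`. Since `H^β` is symmetric, pairing the
families `H` and `S` gives `2 |V|²`, whereas `|S|² = 2 (|w|² |V|² + ∑ ⟨w^β, V⟩²)`. The
Cauchy–Schwarz inequality therefore bounds `a = |V|² / s` and `b = ∑ ⟨w^β, V⟩² / s²` by
`2 a² ≤ |H|² (a + b)`, and Young's inequality turns this into `2 c a ≤ |H|² + c² (a + b) / 2` for
every `c`. The bound is linear in `(|H|², a, b)`, so what remains is the choice of `c`: the optimal
value is `4 α (2 - p) / (2 - p + α + α (2 - p))` as long as it exceeds `1`, and otherwise `c = 1`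
together with `b ≤ a` gives the constant `(p - 1) (1 - α)`.
-/

open scoped Matrix

section SymmetricTensor

variable {ι κ R : Type*}

/-- The symmetrized tensor product `v ⊗ w + w ⊗ v` of two vectors, as a matrix and without the
customary factor `1 / 2`. It is the test matrix in the Cauchy–Schwarz inequality below. -/
def symmTensor [CommSemiring R] (v w : κ → R) : Matrix κ κ R :=
  Matrix.vecMulVec v w + Matrix.vecMulVec w v

theorem symmTensor_apply [CommSemiring R] (v w : κ → R) (i j : κ) :
    symmTensor v w i j = v i * w j + w i * v j := rfl

variable [Fintype ι] [Fintype κ]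

theorem sum_mul_symmTensor [CommSemiring R] {A : Matrix κ κ R} (hA : A.IsSymm) (v w : κ → R) :
    ∑ i, ∑ j, A i j * symmTensor v w i j = 2 * (v ⬝ᵥ A *ᵥ w) := by
  have pairing : ∑ i, ∑ j, A i j * (v i * w j) = v ⬝ᵥ A *ᵥ w := by
    simp only [dotProduct, Matrix.mulVec, mul_sum, mul_left_comm]
  have pairing_swap : ∑ i, ∑ j, A i j * (w i * v j) = v ⬝ᵥ A *ᵥ w := by
    rw [← pairing, sum_comm]
    simp only [hA.apply, mul_comm (w _)]
  simp only [symmTensor_apply, mul_add, sum_add_distrib, pairing, pairing_swap, two_mul]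

theorem sum_symmTensor_sq [CommSemiring R] (v w : κ → R) :
    ∑ i, ∑ j, symmTensor v w i j ^ 2 =
      2 * ((∑ j, w j ^ 2) * ∑ i, v i ^ 2 + (w ⬝ᵥ v) ^ 2) := by
  calc ∑ i, ∑ j, symmTensor v w i j ^ 2
      = ∑ i, ∑ j, (v i ^ 2 * w j ^ 2 + w i ^ 2 * v j ^ 2 + 2 * (w i * v i * (w j * v j))) := by
        refine sum_congr rfl fun i _ => sum_congr rfl fun j _ => ?_
        rw [symmTensor_apply]
        ring
    _ = 2 * ((∑ j, w j ^ 2) * ∑ i, v i ^ 2 + (w ⬝ᵥ v) ^ 2) := by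
        simp only [sum_add_distrib, ← mul_sum, ← sum_mul, dotProduct]
        ring

theorem sum_dotProduct_mulVec_sum [CommSemiring R] (H : ι → Matrix κ κ R) (w : ι → κ → R) :
    ∑ β, (fun i => ∑ γ, (H γ *ᵥ w γ) i) ⬝ᵥ H β *ᵥ w β = ∑ i, (∑ β, (H β *ᵥ w β) i) ^ 2 := by
  simp only [dotProduct, sq, mul_sum]
  exact sum_comm

variable [CommRing R] [LinearOrder R] [IsStrictOrderedRing R]

theorem sum_matrix_mul_sq_le_sq_mul_sq (A B : ι → Matrix κ κ R) :
    (∑ β, ∑ i, ∑ j, A β i j * B β i j) ^ 2 ≤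
      (∑ β, ∑ i, ∑ j, A β i j ^ 2) * ∑ β, ∑ i, ∑ j, B β i j ^ 2 := by
  simpa only [Fintype.sum_prod_type] using
    sum_mul_sq_le_sq_mul_sq (univ : Finset (ι × κ × κ))
      (fun x => A x.1 x.2.1 x.2.2) (fun x => B x.1 x.2.1 x.2.2)

theorem two_mul_sum_dotProduct_mulVec_sq_le {H : ι → Matrix κ κ R} (hH : ∀ β, (H β).IsSymm)
    (w : ι → κ → R) (v : κ → R) :
    2 * (∑ β, v ⬝ᵥ H β *ᵥ w β) ^ 2 ≤
      (∑ β, ∑ i, ∑ j, H β i j ^ 2) *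
        ((∑ β, ∑ j, w β j ^ 2) * ∑ i, v i ^ 2 + ∑ β, (w β ⬝ᵥ v) ^ 2) := by
  have cauchy_schwarz := sum_matrix_mul_sq_le_sq_mul_sq H fun β => symmTensor v (w β)
  simp only [sum_mul_symmTensor (hH _), sum_symmTensor_sq, ← mul_sum, sum_add_distrib,
    ← sum_mul] at cauchy_schwarz
  linarith

theorem sum_dotProduct_sq_le (w : ι → κ → R) (v : κ → R) :
    ∑ β, (w β ⬝ᵥ v) ^ 2 ≤ (∑ β, ∑ j, w β j ^ 2) * ∑ i, v i ^ 2 := by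
  rw [sum_mul]
  exact sum_le_sum fun β _ => sum_mul_sq_le_sq_mul_sq univ (w β) v

end SymmetricTensor

section ScalarInequalities

variable {p α h a b : ℝ}

theorem two_mul_mul_le_add_of_two_mul_sq_le {m : ℝ} (hh : 0 ≤ h) (hm : 0 ≤ m)
    (ham : 2 * a ^ 2 ≤ h * m) (c : ℝ) : 2 * c * a ≤ h + c ^ 2 / 2 * m := by
  refine le_of_sq_le_sq ?_ (by positivity)
  calc (2 * c * a) ^ 2 = 2 * c ^ 2 * (2 * a ^ 2) := by ring
    _ ≤ 2 * c ^ 2 * (h * m) := by gcongr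
    _ = 4 * h * (c ^ 2 / 2 * m) := by ring
    _ ≤ (h + c ^ 2 / 2 * m) ^ 2 := four_mul_le_sq_add _ _

theorem two_mul_div_sq_le_of_two_mul_sq_le {A B T s : ℝ} (hs : 0 < s) (hTs : T ≤ s) (hh : 0 ≤ h)
    (hA : 0 ≤ A) (hAB : 2 * A ^ 2 ≤ h * (T * A + B)) :
    2 * (A / s) ^ 2 ≤ h * (A / s + B / s ^ 2) := by
  calc 2 * (A / s) ^ 2 = 2 * A ^ 2 / s ^ 2 := by ring
    _ ≤ h * (T * A + B) / s ^ 2 := by gcongr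
    _ ≤ h * (s * A + B) / s ^ 2 := by gcongr
    _ = h * (A / s + B / s ^ 2) := by field_simp

theorem div_sq_le_div_of_le_mul {A B T s : ℝ} (hs : 0 < s) (hTs : T ≤ s) (hA : 0 ≤ A)
    (hBA : B ≤ T * A) : B / s ^ 2 ≤ A / s := by
  calc B / s ^ 2 ≤ s * A / s ^ 2 := by
        gcongr
        exact hBA.trans (by gcongr)
    _ = A / s := by field_simp

/-- The constant `K_N(p, α)` of the pointwise bound. Both of its last two cases have the value
`(p - 1) (1 - α)`, so they are merged into the `else` branch. -/
noncomputable def pointwiseConstant (p α : ℝ) : ℝ :=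
  if p < 3 / 2 ∧ (p - 2) / (3 * p - 5) < α then
    1 + (α * (p - 2) + p - 2 - α) ^ 2 / (8 * α * (p - 2))
  else (p - 1) * (1 - α)

theorem one_add_div_mul_le_of_young (hp : p < 2) (hα : 0 < α)
    (young : ∀ c, 2 * c * a ≤ h + c ^ 2 / 2 * (a + b)) :
    (1 + (α * (p - 2) + p - 2 - α) ^ 2 / (8 * α * (p - 2))) * h ≤
      h + (p - 2 - α) * a - α * (p - 2) * b := by
  obtain ⟨q, rfl⟩ : ∃ q, p = 2 - q := ⟨2 - p, by ring⟩
  have hq : 0 < q := by linarith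
  set D := q + α + α * q
  have hD_pos : 0 < D := by positivity
  have optimal : D * a ≤ D ^ 2 / (8 * α * q) * h + α * q * (a + b) := by
    calc D * a = D ^ 2 / (8 * α * q) * (2 * (4 * α * q / D) * a) := by field_simp; ring
      _ ≤ D ^ 2 / (8 * α * q) * (h + (4 * α * q / D) ^ 2 / 2 * (a + b)) := by
        gcongr
        exact young _
      _ = D ^ 2 / (8 * α * q) * h + α * q * (a + b) := by field_simp; ring
  have constant_eq : (α * (2 - q - 2) + (2 - q) - 2 - α) ^ 2 / (8 * α * (2 - q - 2)) =
      -(D ^ 2 / (8 * α * q)) := by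
    rw [← div_neg]
    congr 1 <;> ring
  rw [constant_eq]
  linarith

theorem sub_one_mul_one_sub_mul_le_of_young (hp : p ≤ 2) (hα : 0 ≤ α)
    (hpα : 3 * α * (2 - p) ≤ 2 - p + α) (hba : b ≤ a)
    (young : ∀ c, 2 * c * a ≤ h + c ^ 2 / 2 * (a + b)) :
    (p - 1) * (1 - α) * h ≤ h + (p - 2 - α) * a - α * (p - 2) * b := by
  have h_coeff : 0 ≤ 2 - p + α - α * (2 - p) := by
    linarith [mul_nonneg hα (sub_nonneg.2 hp)]
  have h_lower : 0 ≤ h - (3 * a - b) / 2 := by linarith [young 1]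
  have decomposition : h + (p - 2 - α) * a - α * (p - 2) * b - (p - 1) * (1 - α) * h =
      (2 - p + α - α * (2 - p)) * (h - (3 * a - b) / 2) +
        (2 - p + α - 3 * α * (2 - p)) * (a - b) / 2 := by
    ring
  rw [← sub_nonneg, decomposition]
  exact add_nonneg (mul_nonneg h_coeff h_lower)
    (div_nonneg (mul_nonneg (sub_nonneg.2 hpα) (sub_nonneg.2 hba)) zero_le_two)

theorem three_mul_mul_two_sub_le (hp : p ≤ 2) (hα₀ : 0 ≤ α) (hα₁ : α ≤ 1)
    (hpα : p < 3 / 2 → α ≤ (p - 2) / (3 * p - 5)) : 3 * α * (2 - p) ≤ 2 - p + α := by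
  rcases lt_or_ge p (3 / 2) with hp_lt | hp_ge
  · have := (le_div_iff_of_neg (by linarith)).1 (hpα hp_lt)
    linarith
  · -- For fixed `α`, the difference is affine in `p`, so the endpoints `3 / 2` and `2` suffice.
    have := mul_nonneg hα₀ (sub_nonneg.2 hp_ge)
    have := mul_nonneg (sub_nonneg.2 hα₁) (sub_nonneg.2 hp)
    linarith

theorem pointwiseConstant_mul_le (hp : p ≤ 2) (hα₀ : 0 ≤ α) (hα₁ : α ≤ 1) (hba : b ≤ a)
    (young : ∀ c, 2 * c * a ≤ h + c ^ 2 / 2 * (a + b)) :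
    pointwiseConstant p α * h ≤ h + (p - 2 - α) * a - α * (p - 2) * b := by
  unfold pointwiseConstant
  split_ifs with hpα
  · have hα_pos : 0 < α :=
      (div_nonneg_of_nonpos (by linarith) (by linarith [hpα.1])).trans_lt hpα.2
    exact one_add_div_mul_le_of_young (by linarith [hpα.1]) hα_pos young
  · rw [not_and, not_lt] at hpα
    exact sub_one_mul_one_sub_mul_le_of_young hp hα₀
      (three_mul_mul_two_sub_le hp hα₀ hα₁ hpα) hba young

end ScalarInequalities

theorem pointwise_bound_p_le_two_general {ι κ : Type*} [Fintype ι] [Fintype κ] {p α s : ℝ}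
    (hp : p ≤ 2) (hα₀ : 0 ≤ α) (hα₁ : α ≤ 1) (w : ι → κ → ℝ) (hs : 0 < s)
    (hws : ∑ β, ∑ j, w β j ^ 2 ≤ s) {H : ι → Matrix κ κ ℝ} (hH : ∀ β, (H β).IsSymm) :
    let V : κ → ℝ := fun i => ∑ β, (H β *ᵥ w β) i
    pointwiseConstant p α * ∑ β, ∑ i, ∑ j, H β i j ^ 2 ≤
      (∑ β, ∑ i, ∑ j, H β i j ^ 2) + (p - 2 - α) * (∑ i, V i ^ 2) / s
        - α * (p - 2) * (∑ β, (w β ⬝ᵥ V) ^ 2) / s ^ 2 := by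
  intro V
  have hH_nonneg : 0 ≤ ∑ β, ∑ i, ∑ j, H β i j ^ 2 := by positivity
  have hV_nonneg : 0 ≤ ∑ i, V i ^ 2 := by positivity
  have cauchy_schwarz := two_mul_sum_dotProduct_mulVec_sq_le hH w V
  rw [sum_dotProduct_mulVec_sum] at cauchy_schwarz
  have young := two_mul_mul_le_add_of_two_mul_sq_le hH_nonneg (by positivity)
    (two_mul_div_sq_le_of_two_mul_sq_le hs hws hH_nonneg hV_nonneg cauchy_schwarz)
  rw [mul_div_assoc, mul_div_assoc]
  exact pointwiseConstant_mul_le hp hα₀ hα₁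
    (div_sq_le_div_of_le_mul hs hws hV_nonneg (sum_dotProduct_sq_le w V)) young

/-- Pointwise lower bound `𝓘 ≥ K_N(p,α) ‖D²u‖²` for `1 < p ≤ 2`. -/
theorem pointwise_bound_p_le_two (n N : ℕ) (hn : 1 ≤ n) (hN : 2 ≤ N)
    (p α ε : ℝ) (hp1 : 1 < p) (hp2 : p ≤ 2) (hα0 : 0 ≤ α) (hα1 : α < 1) (hε : 0 < ε)
    (w : Fin N → Fin n → ℝ) (H : Fin N → Matrix (Fin n) (Fin n) ℝ)
    (hsym : ∀ β, (H β).IsSymm) :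
    let s : ℝ := ε + ∑ β, ∑ j, (w β j) ^ 2;
    let V : Fin n → ℝ := fun i => ∑ β, (H β).mulVec (w β) i;
    let KN : ℝ :=
      if p < 3/2 ∧ (p - 2) / (3*p - 5) < α then
        1 + (α * (p - 2) + p - 2 - α)^2 / (8 * α * (p - 2))
      else (p - 1) * (1 - α);
    (∑ β, ∑ i, ∑ j, (H β i j) ^ 2) + (p - 2 - α) * (∑ i, (V i) ^ 2) / s
        - α * (p - 2) * (∑ k, (∑ i, w k i * V i) ^ 2) / s ^ 2
      ≥ KN * ∑ β, ∑ i, ∑ j, (H β i j) ^ 2 := by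
  exact pointwise_bound_p_le_two_general hp2 hα0 hα1.le w (by positivity)
    (le_add_of_nonneg_left hε.le) hsym
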